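/- For all nonnegative integers m, n and all z₁, z₂ ∈ ℂ, the raising formulae hold: H_{m+1,n}(z₁, z₂) = z₁ H_{m,n}(z₁, z₂) − ∂H_{m,n}/∂z₂ (z₁, z₂), and H_{m,n+1}(z₁, z₂) = z₂ H_{m,n}(z₁, z₂) − ∂H_{m,n}/∂z₁ (z₁, z₂), where the partial derivatives are complex derivatives in the indicated variable with the other variable held fixed. -/

import Mathlib

/-!
Both formulae are identities between coefficients. Once the sums are extended by vanishing terms to
a range that does not depend on `n`, the coefficient of index `k + 1` in `H_{m+1,n}` splits by
Pascal's rule `C(m+1,k+1) = C(m,k) + C(m,k+1)`: the part with `C(m,k+1)` is the term of index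
`k + 1` of `z₁ H_{m,n}`, and the part with `C(m,k)` is minus the `z₂`-derivative of the term of
index `k` of `H_{m,n}`, because `(k+1) C(n,k+1) = (n-k) C(n,k)`. The second formula follows from the
first by the symmetry `H_{m,n}(z₁,z₂) = H_{n,m}(z₂,z₁)`.
-/

open Complex Finset

/-- The holomorphic Hermite polynomial in two variables. -/
noncomputable def hermite2 (m n : ℕ) (z₁ z₂ : ℂ) : ℂ :=
  ∑ k ∈ Finset.range (min m n + 1),
    (m.choose k : ℂ) * (n.choose k : ℂ) * (-1) ^ k * (Nat.factorial k : ℂ) *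
      z₁ ^ (m - k) * z₂ ^ (n - k)

/-- The upper limit of summation may be enlarged, since the binomial coefficients vanish for
`k > min m n`. -/
lemma hermite2_eq_sum_range {m n N : ℕ} (hN : min m n ≤ N) (z₁ z₂ : ℂ) :
    hermite2 m n z₁ z₂ = ∑ k ∈ Finset.range (N + 1),
      (m.choose k : ℂ) * (n.choose k : ℂ) * (-1) ^ k * (Nat.factorial k : ℂ) *
        z₁ ^ (m - k) * z₂ ^ (n - k) := by
  unfold hermite2
  refine Finset.sum_subset (Finset.range_mono (by omega)) fun k _ hk => ?_
  have hk' : m < k ∨ n < k := by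
    rw [Finset.mem_range] at hk
    omega
  rcases hk' with h | h <;> simp [Nat.choose_eq_zero_of_lt h]

lemma hermite2_symm (m n : ℕ) (z₁ z₂ : ℂ) : hermite2 m n z₁ z₂ = hermite2 n m z₂ z₁ := by
  unfold hermite2
  rw [min_comm]
  exact Finset.sum_congr rfl fun k _ => by ring

lemma hasDerivAt_hermite2_right (m n : ℕ) (z₁ z₂ : ℂ) :
    HasDerivAt (fun w => hermite2 m n z₁ w)
      (∑ k ∈ Finset.range (m + 1),
        (m.choose k : ℂ) * (n.choose k : ℂ) * (-1) ^ k * (Nat.factorial k : ℂ) *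
          z₁ ^ (m - k) * (((n - k : ℕ) : ℂ) * z₂ ^ (n - k - 1))) z₂ := by
  simp_rw [hermite2_eq_sum_range (min_le_left m n)]
  exact HasDerivAt.fun_sum fun k _ => (hasDerivAt_pow (n - k) z₂).const_mul _

lemma hermite2_succ_left (m n : ℕ) (z₁ z₂ : ℂ) :
    hermite2 (m + 1) n z₁ z₂ =
      z₁ * hermite2 m n z₁ z₂ - deriv (fun w => hermite2 m n z₁ w) z₂ := by
  rw [(hasDerivAt_hermite2_right m n z₁ z₂).deriv,
    hermite2_eq_sum_range (min_le_left (m + 1) n),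
    hermite2_eq_sum_range (N := m + 1) (by omega : min m n ≤ m + 1),
    Finset.sum_range_succ', Finset.sum_range_succ' _ (m + 1), mul_add, Finset.mul_sum,
    add_sub_right_comm, ← Finset.sum_sub_distrib]
  congr 1
  · refine Finset.sum_congr rfl fun k _ => ?_
    have hn : (n.choose (k + 1) : ℂ) * ((k : ℂ) + 1) = n.choose k * ((n - k : ℕ) : ℂ) := by
      exact_mod_cast Nat.choose_succ_right_eq n k
    -- For `k ≥ m` the exponent `m - (k + 1)` truncates, but then the binomial coefficient is zero.
    have hm : (m.choose (k + 1) : ℂ) * (z₁ * z₁ ^ (m - (k + 1))) =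
        m.choose (k + 1) * z₁ ^ (m - k) := by
      rcases lt_or_ge k m with h | h
      · rw [← pow_succ', show m - (k + 1) + 1 = m - k by omega]
      · simp [Nat.choose_eq_zero_of_lt (Nat.lt_succ_of_le h)]
    rw [Nat.choose_succ_succ, Nat.factorial_succ, Nat.add_sub_add_right, Nat.sub_sub]
    push_cast
    linear_combination
      (-(m.choose k : ℂ) * (-1) ^ k * (Nat.factorial k : ℂ) * z₁ ^ (m - k) *
        z₂ ^ (n - (k + 1))) * hn +
      ((n.choose (k + 1) : ℂ) * (-1) ^ k * ((k : ℂ) + 1) * (Nat.factorial k : ℂ) *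
        z₂ ^ (n - (k + 1))) * hm
  · simp [pow_succ']
    ring

theorem raising_formulae (m n : ℕ) (z₁ z₂ : ℂ) :
    hermite2 (m + 1) n z₁ z₂ =
      z₁ * hermite2 m n z₁ z₂ - deriv (fun w => hermite2 m n z₁ w) z₂ ∧
    hermite2 m (n + 1) z₁ z₂ =
      z₂ * hermite2 m n z₁ z₂ - deriv (fun w => hermite2 m n w z₂) z₁ := by
  refine ⟨hermite2_succ_left m n z₁ z₂, ?_⟩
  simp_rw [fun a b w => hermite2_symm a b w z₂]
  exact hermite2_succ_left n m z₂ z₁
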